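/- Let x : ℝ → ℝ³ be a Kepler solution on an open interval I (twice differentiable, x(t) ≠ 0, x''(t) = −(G·M/4)·x(t)/‖x(t)‖³ on I, with G, M > 0). Then the orbit is confined to the plane orthogonal to the (conserved) angular momentum: for all t, s ∈ I, the inner product of x(t) with J(s) := x(s) × x'(s) is zero, i.e. x(t) · (x(s) × x'(s)) = 0. -/

import Mathlib

open scoped RealInnerProductSpace

/-- The cross product on `ℝ³ = EuclideanSpace ℝ (Fin 3)`. -/
noncomputable def cross3 (a b : EuclideanSpace ℝ (Fin 3)) : EuclideanSpace ℝ (Fin 3) :=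
  (EuclideanSpace.equiv (Fin 3) ℝ).symm
    ![a 1 * b 2 - a 2 * b 1, a 2 * b 0 - a 0 * b 2, a 0 * b 1 - a 1 * b 0]

/-!
A central force makes the acceleration parallel to the position, so both terms of
`(x × x')' = x × x'' + x' × x'` vanish and the angular momentum is constant. Since `x t` is
orthogonal to the angular momentum at time `t`, it is orthogonal to it at every other time.
-/

section AlternatingBilinear

variable {𝕜 E F : Type*} [NormedAddCommGroup E] [NormedAddCommGroup F]

theorem hasDerivWithinAt_bilinear_of_central [NontriviallyNormedField 𝕜]
    [NormedSpace 𝕜 E] [NormedSpace 𝕜 F] {B : E →L[𝕜] E →L[𝕜] F} (hB : ∀ a, B a a = 0)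
    {x v : 𝕜 → E} {c t : 𝕜} {I : Set 𝕜} (hx : HasDerivWithinAt x (v t) I t)
    (hv : HasDerivWithinAt v (c • x t) I t) :
    HasDerivWithinAt (fun u ↦ B (x u) (v u)) 0 I t := by
  simpa only [map_smul, hB, smul_zero, add_zero] using B.hasDerivWithinAt_of_bilinear hx hv

theorem bilinear_eq_of_central [RCLike 𝕜] [NormedSpace 𝕜 E] [NormedSpace 𝕜 F]
    {B : E →L[𝕜] E →L[𝕜] F} (hB : ∀ a, B a a = 0) {x v : 𝕜 → E} {c : 𝕜 → 𝕜} {I : Set 𝕜}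
    (hI : Convex ℝ I) (hx : ∀ t ∈ I, HasDerivWithinAt x (v t) I t)
    (hv : ∀ t ∈ I, HasDerivWithinAt v (c t • x t) I t) {t s : 𝕜} (ht : t ∈ I) (hs : s ∈ I) :
    B (x s) (v s) = B (x t) (v t) := by
  have norm_sub_le : ‖B (x s) (v s) - B (x t) (v t)‖ ≤ 0 * ‖s - t‖ :=
    hI.norm_image_sub_le_of_norm_hasDerivWithin_le
      (fun u hu ↦ hasDerivWithinAt_bilinear_of_central hB (hx u hu) (hv u hu))
      (fun _ _ ↦ norm_zero.le) ht hs
  rwa [zero_mul, norm_le_zero_iff, sub_eq_zero] at norm_sub_le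

end AlternatingBilinear

section CrossProduct

/-- The cross product `cross3` as a continuous bilinear map, which gives access to the product rule.
It is Mathlib's `crossProduct` transported along `EuclideanSpace ℝ (Fin 3) ≃ₗ[ℝ] (Fin 3 → ℝ)`. -/
noncomputable def cross3Bilin :
    EuclideanSpace ℝ (Fin 3) →L[ℝ] EuclideanSpace ℝ (Fin 3) →L[ℝ] EuclideanSpace ℝ (Fin 3) :=
  let e := WithLp.linearEquiv 2 ℝ (Fin 3 → ℝ)
  ((crossProduct.compl₁₂ e.toLinearMap e.toLinearMap).compr₂
    e.symm.toLinearMap).toContinuousBilinearMap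

theorem cross3Bilin_apply (a b : EuclideanSpace ℝ (Fin 3)) : cross3Bilin a b = cross3 a b :=
  rfl

theorem cross3_eq_toLp_crossProduct (a b : EuclideanSpace ℝ (Fin 3)) :
    cross3 a b = WithLp.toLp 2 (crossProduct a.ofLp b.ofLp) :=
  rfl

theorem cross3_self (a : EuclideanSpace ℝ (Fin 3)) : cross3 a a = 0 := by
  rw [cross3_eq_toLp_crossProduct, cross_self, WithLp.toLp_zero]

theorem inner_self_cross3 (a b : EuclideanSpace ℝ (Fin 3)) : ⟪a, cross3 a b⟫ = 0 := by
  rw [cross3_eq_toLp_crossProduct, EuclideanSpace.inner_eq_star_dotProduct, star_trivial,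
    dotProduct_comm, dot_self_cross]

end CrossProduct

theorem cross3_eq_of_central {I : Set ℝ} (hI : I.OrdConnected)
    {x v : ℝ → EuclideanSpace ℝ (Fin 3)} {c : ℝ → ℝ}
    (hx : ∀ t ∈ I, HasDerivWithinAt x (v t) I t)
    (hv : ∀ t ∈ I, HasDerivWithinAt v (c t • x t) I t) {t s : ℝ} (ht : t ∈ I) (hs : s ∈ I) :
    cross3 (x s) (v s) = cross3 (x t) (v t) := by
  have cross3Bilin_self (a) : cross3Bilin a a = 0 := by rw [cross3Bilin_apply, cross3_self]
  simpa only [cross3Bilin_apply] using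
    bilinear_eq_of_central cross3Bilin_self hI.convex hx hv ht hs

theorem kepler_orbit_planar_general {I : Set ℝ} (hI : I.OrdConnected)
    {x v : ℝ → EuclideanSpace ℝ (Fin 3)} {c : ℝ → ℝ}
    (hx : ∀ t ∈ I, HasDerivWithinAt x (v t) I t)
    (hv : ∀ t ∈ I, HasDerivWithinAt v (c t • x t) I t) {t s : ℝ} (ht : t ∈ I) (hs : s ∈ I) :
    ⟪x t, cross3 (x s) (v s)⟫ = 0 := by
  rw [cross3_eq_of_central hI hx hv ht hs, inner_self_cross3]

/-- A Kepler orbit is confined to the plane orthogonal to the (conserved) angular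
momentum: for all `t, s ∈ I`, `x(t) · (x(s) × x'(s)) = 0`. -/
theorem kepler_orbit_planar
    (G M : ℝ) (hG : 0 < G) (hM : 0 < M)
    (I : Set ℝ) (hIopen : IsOpen I) (hIconn : I.OrdConnected)
    (x : ℝ → EuclideanSpace ℝ (Fin 3))
    (hx1 : ∀ t ∈ I, DifferentiableAt ℝ x t)
    (hx2 : ∀ t ∈ I, DifferentiableAt ℝ (deriv x) t)
    (hx0 : ∀ t ∈ I, x t ≠ 0)
    (hode : ∀ t ∈ I, deriv (deriv x) t = (-(G * M / 4) / ‖x t‖ ^ 3) • x t)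
    (t s : ℝ) (ht : t ∈ I) (hs : s ∈ I) :
    ⟪x t, cross3 (x s) (deriv x s)⟫ = 0 :=
  kepler_orbit_planar_general hIconn (fun u hu ↦ (hx1 u hu).hasDerivAt.hasDerivWithinAt)
    (fun u hu ↦ hode u hu ▸ (hx2 u hu).hasDerivAt.hasDerivWithinAt) ht hs
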